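/- arXiv:1911.04277 — 3 statements merged into one kernel-verified Lean document; each statement's English description precedes it below -/
import Mathlib

section
/- Let G be a finite simple undirected graph with no isolated vertices admitting a split partition (K, I) where K is a clique, I is an independent set, and every vertex of K has at least one neighbor in I. If |I| = 2 and |K| = 2p − 1 for some natural number p ≥ 2, then every maximal matching of G has exactly p edges. -/
/-!
The vertices left uncovered by a maximal matching form an independent set. Such a set meets the
clique `K` in at most one vertex, and that vertex has a neighbor in `I`, which is then covered; so
at most `#I` vertices are uncovered. A maximal matching `M` thus satisfies
`#K ≤ 2 * #M ≤ #K + #I`, and for `#K` odd and `#I ≤ 2` this interval contains only one even number.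
-/

open Finset

variable {V : Type*}

/-- A matching of `G`: a set of edges of `G` that are pairwise disjoint. -/
def IsMatching (G : SimpleGraph V) (M : Finset (Sym2 V)) : Prop :=
  (↑M : Set (Sym2 V)) ⊆ G.edgeSet ∧
    ∀ e ∈ M, ∀ f ∈ M, e ≠ f → ∀ v : V, v ∈ e → v ∉ f

/-- A maximal matching of `G`: a matching such that every edge of `G` shares an
endpoint with some edge of the matching. -/
def IsMaximalMatching (G : SimpleGraph V) (M : Finset (Sym2 V)) : Prop :=
  IsMatching G M ∧ ∀ e ∈ G.edgeSet, ∃ f ∈ M, ∃ v : V, v ∈ e ∧ v ∈ f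

/-- `G` is equimatchable if all maximal matchings have the same cardinality. -/
def Equimatchable (G : SimpleGraph V) : Prop :=
  ∀ M₁ M₂ : Finset (Sym2 V), IsMaximalMatching G M₁ → IsMaximalMatching G M₂ →
    M₁.card = M₂.card

/-- An independent set: a set of pairwise non-adjacent vertices. -/
def IsIndepSet (G : SimpleGraph V) (s : Set V) : Prop :=
  s.Pairwise fun a b => ¬ G.Adj a b

/-- A split graph: the vertex set can be partitioned into a clique and an
independent set. -/
def IsSplitGraph (G : SimpleGraph V) : Prop :=
  ∃ K I : Set V, Disjoint K I ∧ K ∪ I = Set.univ ∧ G.IsClique K ∧ IsIndepSet G I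

section

variable {G : SimpleGraph V} {M : Finset (Sym2 V)}

theorem IsIndepSet.card_le_card_of_isClique [DecidableEq V] {S K I : Finset V}
    (hS : IsIndepSet G (S : Set V)) (hSKI : S ⊆ K ∪ I) (hK : G.IsClique (K : Set V))
    (hKI : ∀ k ∈ K, ∃ i ∈ I, G.Adj k i) : #S ≤ #I := by
  have mem_I_of_notMem_K {v : V} (hvS : v ∈ S) (hvK : v ∉ K) : v ∈ I :=
    (mem_union.1 (hSKI hvS)).resolve_left hvK
  by_cases hdisj : Disjoint S K
  · exact card_le_card fun v hv => mem_I_of_notMem_K hv (disjoint_left.1 hdisj hv)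
  · obtain ⟨k, hkS, hkK⟩ := not_disjoint_iff.1 hdisj
    obtain ⟨i, hi, hki⟩ := hKI k hkK
    have erase_subset_erase : S.erase k ⊆ I.erase i := by
      intro v hv
      obtain ⟨hvk, hvS⟩ := mem_erase.1 hv
      have hkv : ¬ G.Adj k v := hS hkS hvS hvk.symm
      have hvK : v ∉ K := fun hvK => hkv (hK hkK hvK hvk.symm)
      have hvi : v ≠ i := fun hvi => hkv (hvi ▸ hki)
      exact mem_erase.2 ⟨hvi, mem_I_of_notMem_K hvS hvK⟩
    calc #S = #(S.erase k) + 1 := (card_erase_add_one hkS).symm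
      _ ≤ #(I.erase i) + 1 := by gcongr
      _ = #I := card_erase_add_one hi

/-- The set of endpoints of the edges in `M`; when `M` is a matching, these are the vertices
saturated by `M`. -/
def coveredVertices [DecidableEq V] (M : Finset (Sym2 V)) : Finset V :=
  M.biUnion Sym2.toFinset

theorem mem_coveredVertices [DecidableEq V] {v : V} : v ∈ coveredVertices M ↔ ∃ e ∈ M, v ∈ e := by
  simp only [coveredVertices, mem_biUnion, Sym2.mem_toFinset]

theorem IsMatching.card_coveredVertices [DecidableEq V] (hM : IsMatching G M) :
    #(coveredVertices M) = 2 * #M := by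
  have pairwiseDisjoint : (M : Set (Sym2 V)).PairwiseDisjoint Sym2.toFinset :=
    fun e he f hf hef => disjoint_left.2 fun v hve hvf =>
      hM.2 e he f hf hef v (Sym2.mem_toFinset.1 hve) (Sym2.mem_toFinset.1 hvf)
  have card_edge (e : Sym2 V) (he : e ∈ M) : #e.toFinset = 2 :=
    Sym2.card_toFinset_of_not_isDiag e (G.not_isDiag_of_mem_edgeSet (hM.1 he))
  rw [coveredVertices, card_biUnion pairwiseDisjoint, sum_const_nat card_edge, mul_comm]

theorem IsMatching.two_mul_card_le [Fintype V] (hM : IsMatching G M) :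
    2 * #M ≤ Fintype.card V := by
  classical
  exact hM.card_coveredVertices ▸ card_le_univ _

theorem IsMaximalMatching.isVertexCover [DecidableEq V] (hM : IsMaximalMatching G M) :
    G.IsVertexCover (coveredVertices M : Set V) := by
  intro v w hvw
  obtain ⟨f, hf, x, hx, hxf⟩ := hM.2 s(v, w) hvw
  have hxM : x ∈ coveredVertices M := mem_coveredVertices.2 ⟨f, hf, hxf⟩
  rcases Sym2.mem_iff.1 hx with rfl | rfl
  · exact Or.inl hxM
  · exact Or.inr hxM

theorem IsMaximalMatching.isIndepSet_compl_coveredVertices [DecidableEq V]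
    (hM : IsMaximalMatching G M) :
    IsIndepSet G (coveredVertices M : Set V)ᶜ :=
  SimpleGraph.isIndepSet_compl_iff_isVertexCover.2 hM.isVertexCover

theorem IsMaximalMatching.card_le_two_mul_card_add [Fintype V] [DecidableEq V] {K I : Finset V}
    (hM : IsMaximalMatching G M) (hcover : K ∪ I = univ) (hK : G.IsClique (K : Set V))
    (hKI : ∀ k ∈ K, ∃ i ∈ I, G.Adj k i) : Fintype.card V ≤ 2 * #M + #I := by
  have uncovered_indep : IsIndepSet G ((coveredVertices M)ᶜ : Finset V) := by
    rw [coe_compl]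
    exact hM.isIndepSet_compl_coveredVertices
  calc Fintype.card V = #(coveredVertices M) + #(coveredVertices M)ᶜ :=
        (card_add_card_compl _).symm
    _ ≤ 2 * #M + #I := by
        rw [hM.1.card_coveredVertices]
        exact Nat.add_le_add_left
          (uncovered_indep.card_le_card_of_isClique (hcover ▸ subset_univ _) hK hKI) _

theorem stmt_2_general [Fintype V] [DecidableEq V] {K I : Finset V} {p : ℕ}
    (hdisj : Disjoint K I) (hcover : K ∪ I = univ) (hclique : G.IsClique (K : Set V))
    (hKI : ∀ k ∈ K, ∃ i ∈ I, G.Adj k i) (hI : #I ≤ 2) (hK : #K + 1 = 2 * p)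
    (hM : IsMaximalMatching G M) : #M = p := by
  have card_V : Fintype.card V = #K + #I := by
    rw [← card_union_of_disjoint hdisj, hcover, card_univ]
  have upper : 2 * #M ≤ Fintype.card V := hM.1.two_mul_card_le
  have lower : Fintype.card V ≤ 2 * #M + #I := hM.card_le_two_mul_card_add hcover hclique hKI
  lia

end

theorem stmt_2 {V : Type*} [Fintype V] [DecidableEq V]
    (G : SimpleGraph V) [DecidableRel G.Adj]
    (hNoIso : ∀ v : V, ∃ w : V, G.Adj v w)
    (K I : Finset V)
    (hdisj : Disjoint K I) (hcover : K ∪ I = Finset.univ)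
    (hclique : G.IsClique (K : Set V)) (hindep : IsIndepSet G (I : Set V))
    (hKI : ∀ k ∈ K, ∃ i ∈ I, G.Adj k i)
    (hI2 : I.card = 2) (p : ℕ) (hp : 2 ≤ p) (hK : K.card = 2 * p - 1) :
    ∀ M : Finset (Sym2 V), IsMaximalMatching G M → M.card = p :=
  fun _ hM => stmt_2_general hdisj hcover hclique hKI hI2.le (by lia) hM
end

section
/- Let G be a finite simple undirected graph with no isolated vertices admitting a split partition (K, I) where K is a clique, I is an independent set, and every vertex of K has at least one neighbor in I. If G is equimatchable, then there do not exist six pairwise distinct vertices k₁, k₂, k₃ ∈ K and i₁, i₂, i₃ ∈ I such that k₁i₁, k₂i₂, and k₃i₃ are all edges of G. -/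
open Finset

variable {V : Type*}

/-!
Let `K` be the clique. Since `K` is a vertex cover, every matching covering all of `K` is maximal.
A crossing matching `M`, one whose edges all have exactly one endpoint in `K`, leaves `#K - #M`
vertices of `K` uncovered; if this number is even, pairing them up inside the clique gives a
maximal matching with `(#K + #M) / 2` edges. In an equimatchable graph, therefore, crossing
matchings whose sizes have the parity of `#K` all have the same size. Three disjoint crossing edges
would contain crossing matchings of sizes `r` and `r + 2`, where `r = #K % 2`.
-/

section Matching

variable {G : SimpleGraph V} {M N : Finset (Sym2 V)}

theorem IsMatching.subset (hM : IsMatching G M) (hNM : N ⊆ M) : IsMatching G N :=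
  ⟨(coe_subset.2 hNM).trans hM.1, fun e he f hf ↦ hM.2 e (hNM he) f (hNM hf)⟩

theorem isMatching_singleton {a b : V} (hab : G.Adj a b) : IsMatching G {s(a, b)} := by
  refine ⟨by simpa only [coe_singleton, Set.singleton_subset_iff], fun e he f hf hef ↦ ?_⟩
  exact absurd ((mem_singleton.1 he).trans (mem_singleton.1 hf).symm) hef

variable [DecidableEq V]

/-- The set of vertices covered by a set `M` of edges. -/
def matchedVertices (M : Finset (Sym2 V)) : Finset V :=
  M.biUnion Sym2.toFinset

theorem mem_matchedVertices {v : V} : v ∈ matchedVertices M ↔ ∃ e ∈ M, v ∈ e := by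
  simp only [matchedVertices, mem_biUnion, Sym2.mem_toFinset]

theorem matchedVertices_union :
    matchedVertices (M ∪ N) = matchedVertices M ∪ matchedVertices N :=
  union_biUnion

theorem matchedVertices_singleton {a b : V} : matchedVertices {s(a, b)} = {a, b} := by
  rw [matchedVertices, singleton_biUnion, Sym2.toFinset_mk_eq]

theorem IsMatching.pairwiseDisjoint_toFinset (hM : IsMatching G M) :
    (M : Set (Sym2 V)).PairwiseDisjoint Sym2.toFinset := by
  intro e he f hf hef
  simpa only [Function.onFun, Finset.disjoint_left, Sym2.mem_toFinset] using hM.2 e he f hf hef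

theorem IsMatching.card_matchedVertices (hM : IsMatching G M) :
    #(matchedVertices M) = 2 * #M := by
  rw [matchedVertices, card_biUnion hM.pairwiseDisjoint_toFinset, mul_comm]
  exact sum_const_nat fun e he ↦
    e.card_toFinset_of_not_isDiag (G.not_isDiag_of_mem_edgeSet (hM.1 he))

theorem IsMatching.card_matchedVertices_inter {S : Finset V} (hM : IsMatching G M)
    (hS : ∀ e ∈ M, #(e.toFinset ∩ S) = 1) : #(matchedVertices M ∩ S) = #M := by
  rw [matchedVertices, biUnion_inter, card_biUnion, sum_congr rfl hS, card_eq_sum_ones]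
  exact fun e he f hf hef ↦
    (hM.pairwiseDisjoint_toFinset he hf hef).mono inter_subset_left inter_subset_left

theorem IsMatching.union (hM : IsMatching G M) (hN : IsMatching G N)
    (hMN : Disjoint (matchedVertices M) (matchedVertices N)) : IsMatching G (M ∪ N) := by
  have hcross : ∀ e ∈ M, ∀ f ∈ N, ∀ v ∈ e, v ∉ f := fun e he f hf v hve hvf ↦
    Finset.disjoint_left.1 hMN (mem_matchedVertices.2 ⟨e, he, hve⟩)
      (mem_matchedVertices.2 ⟨f, hf, hvf⟩)
  refine ⟨by simpa only [coe_union] using Set.union_subset hM.1 hN.1, fun e he f hf hef v hve ↦ ?_⟩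
  rcases mem_union.1 he with heM | heN <;> rcases mem_union.1 hf with hfM | hfN
  · exact hM.2 e heM f hfM hef v hve
  · exact hcross e heM f hfN v hve
  · exact fun hvf ↦ hcross f hfM e heN v hvf hve
  · exact hN.2 e heN f hfN hef v hve

theorem IsMatching.isMaximalMatching_of_isVertexCover (hM : IsMatching G M)
    (hcover : G.IsVertexCover (matchedVertices M)) : IsMaximalMatching G M := by
  refine ⟨hM, Sym2.ind fun a b hab ↦ ?_⟩
  rcases hcover hab with ha | hb
  · obtain ⟨f, hf, haf⟩ := mem_matchedVertices.1 ha
    exact ⟨f, hf, a, Sym2.mem_mk_left a b, haf⟩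
  · obtain ⟨f, hf, hbf⟩ := mem_matchedVertices.1 hb
    exact ⟨f, hf, b, Sym2.mem_mk_right a b, hbf⟩

theorem exists_isMatching_matchedVertices_eq_of_isClique {S : Finset V}
    (hS : G.IsClique (S : Set V)) (hEven : Even #S) :
    ∃ P, IsMatching G P ∧ matchedVertices P = S := by
  classical
  obtain ⟨H, hverts, hH⟩ := (hS.even_iff_exists_isMatching S.finite_toSet).1
    (by rwa [Set.ncard_coe_finset])
  have hmem : ∀ e, e ∈ {e ∈ S.sym2 | e ∈ H.edgeSet} ↔ e ∈ H.edgeSet := fun e ↦ by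
    rw [mem_filter, and_iff_right_iff_imp, mem_sym2_iff]
    exact fun he v hv ↦ mem_coe.1 (hverts ▸ H.mem_verts_of_mem_edge he hv)
  refine ⟨{e ∈ S.sym2 | e ∈ H.edgeSet}, ⟨fun e he ↦ H.edgeSet_subset ((hmem e).1 he), ?_⟩, ?_⟩
  · rintro e he f hf hef v ⟨a, rfl⟩ ⟨b, rfl⟩
    exact hef (congrArg _ (hH.eq_of_adj_left ((hmem _).1 he) ((hmem _).1 hf)))
  · ext v
    rw [← mem_coe (s := S), ← hverts, hH.verts_eq_biUnion_edgeSet]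
    simp only [mem_matchedVertices, hmem, Set.mem_iUnion, SetLike.mem_coe, exists_prop]

variable {K : Finset V}

theorem IsMatching.exists_isMaximalMatching_two_mul_card_eq (hclique : G.IsClique (K : Set V))
    (hcover : G.IsVertexCover (K : Set V)) (hM : IsMatching G M)
    (hcross : ∀ e ∈ M, #(e.toFinset ∩ K) = 1) (hEven : Even (#K + #M)) :
    ∃ N, IsMaximalMatching G N ∧ 2 * #N = #K + #M := by
  have hinter : #(matchedVertices M ∩ K) = #M := hM.card_matchedVertices_inter hcross
  have hrest : #(K \ matchedVertices M) + #M = #K := by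
    rw [← hinter, inter_comm, card_sdiff_add_card_inter]
  have hrestEven : Even #(K \ matchedVertices M) := by grind
  obtain ⟨P, hP, hPverts⟩ := exists_isMatching_matchedVertices_eq_of_isClique
    (hclique.subset (coe_subset.2 sdiff_subset)) hrestEven
  have hMP : IsMatching G (M ∪ P) := hM.union hP (hPverts ▸ disjoint_sdiff)
  have hverts : matchedVertices (M ∪ P) = matchedVertices M ∪ K := by
    rw [matchedVertices_union, hPverts, union_sdiff_self_eq_union]
  refine ⟨M ∪ P, hMP.isMaximalMatching_of_isVertexCover (hcover.subset ?_), ?_⟩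
  · exact coe_subset.2 (hverts ▸ subset_union_right)
  · have hcard := card_union_add_card_inter (matchedVertices M) K
    rw [← hverts, hMP.card_matchedVertices, hM.card_matchedVertices, hinter] at hcard
    omega

theorem Equimatchable.card_eq_card_of_crossing (hEq : Equimatchable G)
    (hclique : G.IsClique (K : Set V)) (hcover : G.IsVertexCover (K : Set V))
    (hM : IsMatching G M) (hMcross : ∀ e ∈ M, #(e.toFinset ∩ K) = 1) (hMeven : Even (#K + #M))
    (hN : IsMatching G N) (hNcross : ∀ e ∈ N, #(e.toFinset ∩ K) = 1) (hNeven : Even (#K + #N)) :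
    #M = #N := by
  obtain ⟨M', hM', hMcard⟩ :=
    hM.exists_isMaximalMatching_two_mul_card_eq hclique hcover hMcross hMeven
  obtain ⟨N', hN', hNcard⟩ :=
    hN.exists_isMaximalMatching_two_mul_card_eq hclique hcover hNcross hNeven
  have := hEq M' N' hM' hN'
  omega

theorem Equimatchable.card_le_two_of_crossing (hEq : Equimatchable G)
    (hclique : G.IsClique (K : Set V)) (hcover : G.IsVertexCover (K : Set V))
    (hM : IsMatching G M) (hcross : ∀ e ∈ M, #(e.toFinset ∩ K) = 1) : #M ≤ 2 := by
  by_contra! hcard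
  obtain ⟨A, hAM, hA⟩ := exists_subset_card_eq (show #K % 2 ≤ #M by omega)
  obtain ⟨B, hBM, hB⟩ := exists_subset_card_eq (show #K % 2 + 2 ≤ #M by omega)
  have hAB : #A = #B := hEq.card_eq_card_of_crossing hclique hcover
    (hM.subset hAM) (fun e he ↦ hcross e (hAM he)) (by grind)
    (hM.subset hBM) (fun e he ↦ hcross e (hBM he)) (by grind)
  omega

end Matching

theorem stmt_4_general {V : Type*} (G : SimpleGraph V) (K : Finset V) (I : Set V)
    (hcompl : IsCompl (K : Set V) I) (hclique : G.IsClique (K : Set V)) (hindep : IsIndepSet G I)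
    (hEq : Equimatchable G) :
    ¬ ∃ k₁ k₂ k₃ i₁ i₂ i₃ : V,
        k₁ ∈ K ∧ k₂ ∈ K ∧ k₃ ∈ K ∧ i₁ ∈ I ∧ i₂ ∈ I ∧ i₃ ∈ I ∧
        ([k₁, k₂, k₃, i₁, i₂, i₃] : List V).Nodup ∧
        G.Adj k₁ i₁ ∧ G.Adj k₂ i₂ ∧ G.Adj k₃ i₃ := by
  classical
  rintro ⟨k₁, k₂, k₃, i₁, i₂, i₃, hk₁, hk₂, hk₃, hi₁, hi₂, hi₃, hnodup, h₁, h₂, h₃⟩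
  have hM : IsMatching G ({s(k₁, i₁)} ∪ ({s(k₂, i₂)} ∪ {s(k₃, i₃)})) :=
    (isMatching_singleton h₁).union
      ((isMatching_singleton h₂).union (isMatching_singleton h₃)
        (by grind [Finset.disjoint_left, matchedVertices_singleton]))
      (by grind [Finset.disjoint_left, matchedVertices_union, matchedVertices_singleton])
  have hcard : #({s(k₁, i₁)} ∪ ({s(k₂, i₂)} ∪ {s(k₃, i₃)}) : Finset (Sym2 V)) = 3 := by grind
  have hcover : G.IsVertexCover (K : Set V) :=
    SimpleGraph.isIndepSet_compl_iff_isVertexCover.1 (hcompl.compl_eq ▸ hindep)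
  have hcross : ∀ k ∈ K, ∀ i ∈ I, #(s(k, i).toFinset ∩ K) = 1 := fun k hk i hi ↦ by
    have hiK : i ∉ K := fun h ↦ Set.disjoint_left.1 hcompl.disjoint h hi
    rw [Sym2.toFinset_mk_eq, insert_inter_of_mem hk, singleton_inter_of_notMem hiK,
      insert_empty_eq, card_singleton]
  have hle := hEq.card_le_two_of_crossing hclique hcover hM (by
    simp only [mem_union, mem_singleton, or_imp, forall_and, forall_eq]
    exact ⟨hcross k₁ hk₁ i₁ hi₁, hcross k₂ hk₂ i₂ hi₂, hcross k₃ hk₃ i₃ hi₃⟩)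
  omega

theorem stmt_4 {V : Type*} [Fintype V] [DecidableEq V]
    (G : SimpleGraph V) [DecidableRel G.Adj]
    (hNoIso : ∀ v : V, ∃ w : V, G.Adj v w)
    (K I : Finset V)
    (hdisj : Disjoint K I) (hcover : K ∪ I = Finset.univ)
    (hclique : G.IsClique (K : Set V)) (hindep : IsIndepSet G (I : Set V))
    (hKI : ∀ k ∈ K, ∃ i ∈ I, G.Adj k i)
    (hEq : Equimatchable G) :
    ¬ ∃ k₁ k₂ k₃ i₁ i₂ i₃ : V,
        k₁ ∈ K ∧ k₂ ∈ K ∧ k₃ ∈ K ∧ i₁ ∈ I ∧ i₂ ∈ I ∧ i₃ ∈ I ∧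
        ([k₁, k₂, k₃, i₁, i₂, i₃] : List V).Nodup ∧
        G.Adj k₁ i₁ ∧ G.Adj k₂ i₂ ∧ G.Adj k₃ i₃ := by
  have hcompl : IsCompl (K : Set V) I := ⟨disjoint_coe.2 hdisj,
    codisjoint_iff.2 (by simp [← coe_union, hcover])⟩
  exact stmt_4_general G K I hcompl hclique hindep hEq
end

section
/- Let G be a finite simple undirected graph with no isolated vertices admitting a split partition (K, I) where K is a clique, I is an independent set, and every vertex of K has at least one neighbor in I. If G is equimatchable, |I| ≥ 3, and |K| ≥ 2, then there exist vertices x ∈ K and y ∈ I such that N(z) = {x} for every z ∈ I − {y}, and either N(y) = K − {x} or N(y) = K, where N(u) denotes the set of neighbors of u in G. -/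
open Finset

variable {V : Type*}

/-!
In a split graph, a matching of size `m` between `K` and `I` extends, whenever `#K - m` is even, to
a maximal matching covering `#K + m` vertices, by pairing off the rest of the clique. All these
numbers agree in an equimatchable graph. As `K` and `I` have a matching of size two, `#K` is odd,
and then a matching of size three is excluded against its submatchings of size one. By König's
theorem the edges between `K` and `I` are covered by two vertices, which must be some `x ∈ K` and
`y ∈ I`.
-/

section Konig

variable {α β : Type*}

/-- The relation `r` contains a matching of size `m` between `K` and `I`, encoded as an injection
into `I` of an `m`-element subset of `K`. -/
def HasBipartiteMatching (r : α → β → Prop) (K : Finset α) (I : Finset β) (m : ℕ) : Prop :=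
  ∃ T ⊆ K, #T = m ∧ ∃ f : T → β, f.Injective ∧ ∀ a, f a ∈ I ∧ r a (f a)

/-- `C ⊆ K` and `D ⊆ I` together form a vertex cover of the bipartite graph with sides `K`, `I` and
edges given by `r`. -/
structure IsBipartiteCover (r : α → β → Prop) (K : Finset α) (I : Finset β)
    (C : Finset α) (D : Finset β) : Prop where
  left_subset : C ⊆ K
  right_subset : D ⊆ I
  mem_or_mem : ∀ a ∈ K, ∀ b ∈ I, r a b → a ∈ C ∨ b ∈ D

variable {r : α → β → Prop} {K C : Finset α} {I D : Finset β} {m n : ℕ}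

theorem HasBipartiteMatching.mono (hmn : m ≤ n) (h : HasBipartiteMatching r K I n) :
    HasBipartiteMatching r K I m := by
  obtain ⟨T, hTK, rfl, f, hf, hfI⟩ := h
  obtain ⟨S, hST, hS⟩ := exists_subset_card_eq hmn
  exact ⟨S, hST.trans hTK, hS, fun a ↦ f ⟨a, hST a.2⟩,
    fun a b hab ↦ Subtype.ext (Subtype.ext_iff.1 (hf hab) :), fun a ↦ hfI ⟨a, hST a.2⟩⟩

theorem IsBipartiteCover.swap (h : IsBipartiteCover r K I C D) :
    IsBipartiteCover (Function.swap r) I K D C :=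
  ⟨h.right_subset, h.left_subset, fun b hb a ha hab ↦ (h.mem_or_mem a ha b hb hab).symm⟩

theorem IsBipartiteCover.right_nonempty (h : IsBipartiteCover r K I C D)
    (hr : ∀ a ∈ K, ∃ b ∈ I, r a b) (hCK : #C < #K) : D.Nonempty := by
  obtain ⟨a, haK, haC⟩ := exists_mem_notMem_of_card_lt_card hCK
  obtain ⟨b, hbI, hab⟩ := hr a haK
  exact ⟨b, (h.mem_or_mem a haK b hbI hab).resolve_left haC⟩

theorem exists_injective_of_card_le_card_biUnion_add [Fintype α] [DecidableEq β]
    (t : α → Finset β) (d : ℕ) (ht : ∀ A : Finset α, #A ≤ #(A.biUnion t) + d) :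
    ∃ (T : Finset β) (f : T → α), f.Injective ∧ (∀ b, ↑b ∈ t (f b)) ∧
      Fintype.card α ≤ #T + d := by
  classical
  -- Hall's condition holds once `d` dummy elements are adjoined to every `t a`.
  let t' (a : α) : Finset (β ⊕ Fin d) := (t a).disjSum univ
  have hall (A : Finset α) : #A ≤ #(A.biUnion t') := by
    rcases A.eq_empty_or_nonempty with rfl | ⟨a, ha⟩
    · simp
    have hsub : (A.biUnion t).disjSum univ ⊆ A.biUnion t' := by
      rintro (b | i) h
      · simpa [t'] using h
      · simpa [t'] using ⟨a, ha⟩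
    calc #A ≤ #(A.biUnion t) + d := ht A
      _ = #((A.biUnion t).disjSum (univ : Finset (Fin d))) := by simp
      _ ≤ #(A.biUnion t') := card_le_card hsub
  obtain ⟨g, hg, hgt⟩ := (all_card_le_biUnion_card_iff_exists_injective t').1 hall
  let S := univ.image g
  have hS (b : S.toLeft) : ∃ a, g a = .inl ↑b := by
    simpa only [S, mem_toLeft, mem_image, mem_univ, true_and] using b.2
  choose f hf using hS
  refine ⟨S.toLeft, f, fun b c hbc ↦ ?_, fun b ↦ ?_, ?_⟩
  · exact Subtype.ext (Sum.inl_injective ((hf b).symm.trans ((congrArg g hbc).trans (hf c))))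
  · simpa [t', hf] using hgt (f b)
  · calc Fintype.card α = #S := (card_image_of_injective univ hg).symm
      _ = #S.toLeft + #S.toRight := card_toLeft_add_card_toRight.symm
      _ ≤ #S.toLeft + d := by gcongr; simpa using card_le_univ S.toRight

theorem hasBipartiteMatching_or_exists_cover (r : α → β → Prop) (K : Finset α) (I : Finset β)
    (m : ℕ) :
    HasBipartiteMatching r K I m ∨ ∃ C D, IsBipartiteCover r K I C D ∧ #C + #D < m := by
  classical
  rcases lt_or_ge #I m with hIm | hmI
  · exact .inr ⟨∅, I, ⟨empty_subset K, Subset.rfl, fun _ _ _ hb _ ↦ .inr hb⟩, by simpa using hIm⟩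
  let t (b : I) : Finset α := {a ∈ K | r a b}
  by_cases ht : ∀ A : Finset I, #A ≤ #(A.biUnion t) + (#I - m)
  · obtain ⟨T, f, hf, hft, hT⟩ := exists_injective_of_card_le_card_biUnion_add t (#I - m) ht
    rw [Fintype.card_coe] at hT
    refine .inl (HasBipartiteMatching.mono (n := #T) (by omega) ?_)
    exact ⟨T, fun a ha ↦ (mem_filter.1 (hft ⟨a, ha⟩)).1, rfl, fun a ↦ f a,
      Subtype.val_injective.comp hf, fun a ↦ ⟨(f a).2, (mem_filter.1 (hft a)).2⟩⟩
  · -- A violation `A` of Hall's condition yields the cover consisting of `N(A)` and `I \ A`.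
    push Not at ht
    obtain ⟨A, hA⟩ := ht
    let A' : Finset β := A.map (Function.Embedding.subtype _)
    have hA'I : A' ⊆ I := map_subtype_subset A
    refine .inr ⟨A.biUnion t, I \ A', ⟨?_, sdiff_subset, fun a ha b hb hab ↦ ?_⟩, ?_⟩
    · exact biUnion_subset.2 fun b _ ↦ filter_subset _ K
    · by_cases hbA : ⟨b, hb⟩ ∈ A
      · exact .inl (mem_biUnion.2 ⟨⟨b, hb⟩, hbA, mem_filter.2 ⟨ha, hab⟩⟩)
      · exact .inr (by simp [A', hb, hbA])
    · have hcard : #(I \ A') + #A = #I := by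
        rw [← card_map (Function.Embedding.subtype _)]
        exact card_sdiff_add_card_eq_card hA'I
      omega

theorem hasBipartiteMatching_or_exists_nonempty_cover (hKI : ∀ a ∈ K, ∃ b ∈ I, r a b)
    (hIK : ∀ b ∈ I, ∃ a ∈ K, r a b) (hmK : m ≤ #K) (hmI : m ≤ #I) :
    HasBipartiteMatching r K I m ∨
      ∃ C D, IsBipartiteCover r K I C D ∧ C.Nonempty ∧ D.Nonempty ∧ #C + #D < m := by
  refine (hasBipartiteMatching_or_exists_cover r K I m).imp_right ?_
  rintro ⟨C, D, hCD, hlt⟩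
  exact ⟨C, D, hCD, hCD.swap.right_nonempty hIK (by omega), hCD.right_nonempty hKI (by omega), hlt⟩

theorem hasBipartiteMatching_two (hKI : ∀ a ∈ K, ∃ b ∈ I, r a b)
    (hIK : ∀ b ∈ I, ∃ a ∈ K, r a b) (hK : 2 ≤ #K) (hI : 2 ≤ #I) :
    HasBipartiteMatching r K I 2 := by
  refine (hasBipartiteMatching_or_exists_nonempty_cover hKI hIK hK hI).resolve_right ?_
  rintro ⟨C, D, -, hC, hD, hlt⟩
  have := hC.card_pos
  have := hD.card_pos
  omega

theorem exists_isBipartiteCover_singleton_of_not_hasBipartiteMatching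
    (hKI : ∀ a ∈ K, ∃ b ∈ I, r a b)
    (hIK : ∀ b ∈ I, ∃ a ∈ K, r a b) (hK : 3 ≤ #K) (hI : 3 ≤ #I)
    (h3 : ¬HasBipartiteMatching r K I 3) : ∃ x y, IsBipartiteCover r K I {x} {y} := by
  obtain ⟨C, D, hCD, hC, hD, hlt⟩ :=
    (hasBipartiteMatching_or_exists_nonempty_cover hKI hIK hK hI).resolve_left h3
  have hCpos := hC.card_pos
  have hDpos := hD.card_pos
  obtain ⟨x, rfl⟩ := card_eq_one.1 (show #C = 1 by omega)
  obtain ⟨y, rfl⟩ := card_eq_one.1 (show #D = 1 by omega)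
  exact ⟨x, y, hCD⟩

end Konig

section Matchings

variable {G : SimpleGraph V}

theorem IsMatching.card_biUnion_toFinset [DecidableEq V] {M : Finset (Sym2 V)}
    (hM : IsMatching G M) : #(M.biUnion Sym2.toFinset) = 2 * #M := by
  have hdisj : (M : Set (Sym2 V)).PairwiseDisjoint Sym2.toFinset := fun e he f hf hef ↦
    disjoint_left.2 fun v hve hvf ↦
      hM.2 e he f hf hef v (Sym2.mem_toFinset.1 hve) (Sym2.mem_toFinset.1 hvf)
  rw [card_biUnion hdisj, mul_comm]
  exact sum_const_nat fun e he ↦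
    Sym2.card_toFinset_of_not_isDiag e (G.not_isDiag_of_mem_edgeSet (hM.1 he))

theorem isMatching_of_coe_eq_edgeSet {M : G.Subgraph} (hM : M.IsMatching) {E : Finset (Sym2 V)}
    (hE : (E : Set (Sym2 V)) = M.edgeSet) : IsMatching G E := by
  refine ⟨hE ▸ M.edgeSet_subset, fun e he f hf hef v hve hvf ↦ hef ?_⟩
  rw [← mem_coe, hE] at he hf
  obtain ⟨u, rfl⟩ := hve
  obtain ⟨w, rfl⟩ := hvf
  exact congrArg (s(v, ·)) (hM.eq_of_adj_left he hf)

theorem exists_isMaximalMatching_of_isVertexCover [Finite V] {C : Set V}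
    (hC : G.IsVertexCover C) {M : G.Subgraph} (hM : M.IsMatching) (hCM : C ⊆ M.verts) :
    ∃ E, IsMaximalMatching G E ∧ M.verts.ncard = 2 * #E := by
  classical
  obtain ⟨E, hE⟩ := M.edgeSet.toFinite.exists_finset_coe
  have hEmatch : IsMatching G E := isMatching_of_coe_eq_edgeSet hM hE
  have hcovered (v : V) : v ∈ M.verts ↔ ∃ e ∈ E, v ∈ e := by
    simp [hM.verts_eq_biUnion_edgeSet, ← hE]
  refine ⟨E, ⟨hEmatch, ?_⟩, ?_⟩
  · rintro ⟨u, v⟩ huv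
    rcases hC huv with hu | hv
    · obtain ⟨f, hf, huf⟩ := (hcovered u).1 (hCM hu)
      exact ⟨f, hf, u, Sym2.mem_mk_left u v, huf⟩
    · obtain ⟨f, hf, hvf⟩ := (hcovered v).1 (hCM hv)
      exact ⟨f, hf, v, Sym2.mem_mk_right u v, hvf⟩
  · have hverts : M.verts = ↑(E.biUnion Sym2.toFinset) := by
      ext v
      simp [hcovered]
    rw [hverts, Set.ncard_coe_finset, hEmatch.card_biUnion_toFinset]

theorem Equimatchable.ncard_verts_eq [Finite V] (hG : Equimatchable G) {C : Set V}
    (hC : G.IsVertexCover C) {M N : G.Subgraph} (hM : M.IsMatching) (hN : N.IsMatching)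
    (hCM : C ⊆ M.verts) (hCN : C ⊆ N.verts) : M.verts.ncard = N.verts.ncard := by
  obtain ⟨E, hE, hME⟩ := exists_isMaximalMatching_of_isVertexCover hC hM hCM
  obtain ⟨F, hF, hNF⟩ := exists_isMaximalMatching_of_isVertexCover hC hN hCN
  rw [hME, hNF, hG E F hE hF]

end Matchings

section SplitGraph

variable {G : SimpleGraph V} {K I : Finset V} {m n : ℕ}

theorem HasBipartiteMatching.exists_isMatching_subgraph
    (h : HasBipartiteMatching G.Adj K I m) (hclique : G.IsClique (K : Set V))
    (hKI : Disjoint K I) (heven : Even (#K + m)) :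
    ∃ M : G.Subgraph, M.IsMatching ∧ (K : Set V) ⊆ M.verts ∧ M.verts.ncard = #K + m := by
  classical
  obtain ⟨T, hTK, rfl, f, hf, hfI⟩ := h
  have hKf : Disjoint (K : Set V) (Set.range f) :=
    (disjoint_coe.2 hKI).mono_right (Set.range_subset_iff.2 fun a ↦ (hfI a).1)
  obtain ⟨M, hMverts, hM⟩ := SimpleGraph.Subgraph.IsMatching.exists_of_disjoint_sets_of_equiv
    (hKf.mono_left (coe_subset.2 hTK)) (Equiv.ofInjective f hf) fun a ↦ (hfI a).2
  obtain ⟨N, hNverts, hN⟩ :=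
    ((hclique.subset (coe_subset.2 sdiff_subset)).even_iff_exists_isMatching
      (K \ T).finite_toSet).1 (by
        rw [Set.ncard_coe_finset, card_sdiff_of_subset hTK]
        exact (Nat.even_sub (card_le_card hTK)).2 (Nat.even_add.1 heven))
  have hverts : (M ⊔ N).verts = (K : Set V) ∪ Set.range f := by
    rw [SimpleGraph.Subgraph.verts_sup, hMverts, hNverts, Set.union_right_comm, ← coe_union,
      union_sdiff_of_subset hTK]
  have hdisj : Disjoint M.support N.support := by
    rw [hM.support_eq_verts, hN.support_eq_verts, hMverts, hNverts, Set.disjoint_union_left]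
    exact ⟨disjoint_coe.2 disjoint_sdiff, (hKf.mono_left (coe_subset.2 sdiff_subset)).symm⟩
  refine ⟨M ⊔ N, hM.sup hN hdisj, hverts ▸ Set.subset_union_left, ?_⟩
  rw [hverts, Set.ncard_union_eq hKf K.finite_toSet (Set.finite_range f), Set.ncard_coe_finset,
    Set.ncard_range_of_injective hf, Nat.card_eq_fintype_card, Fintype.card_coe]

theorem Equimatchable.hasBipartiteMatching_unique [Finite V] (hG : Equimatchable G)
    (hclique : G.IsClique (K : Set V)) (hcover : G.IsVertexCover (K : Set V))
    (hKI : Disjoint K I) (hm : HasBipartiteMatching G.Adj K I m)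
    (hn : HasBipartiteMatching G.Adj K I n) (hm_even : Even (#K + m))
    (hn_even : Even (#K + n)) : m = n := by
  obtain ⟨M, hM, hKM, hMcard⟩ := hm.exists_isMatching_subgraph hclique hKI hm_even
  obtain ⟨N, hN, hKN, hNcard⟩ := hn.exists_isMatching_subgraph hclique hKI hn_even
  have := hG.ncard_verts_eq hcover hM hN hKM hKN
  omega

theorem Equimatchable.not_hasBipartiteMatching_add_two [Finite V] (hG : Equimatchable G)
    (hclique : G.IsClique (K : Set V)) (hcover : G.IsVertexCover (K : Set V))
    (hKI : Disjoint K I) (heven : Even (#K + m)) : ¬HasBipartiteMatching G.Adj K I (m + 2) := by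
  intro h
  have := hG.hasBipartiteMatching_unique hclique hcover hKI (h.mono (Nat.le_add_right m 2)) h
    heven (heven.add even_two)
  omega

theorem Equimatchable.exists_isBipartiteCover_singleton [Finite V] (hG : Equimatchable G)
    (hclique : G.IsClique (K : Set V)) (hcover : G.IsVertexCover (K : Set V))
    (hdisj : Disjoint K I) (hKI : ∀ a ∈ K, ∃ b ∈ I, G.Adj a b)
    (hIK : ∀ b ∈ I, ∃ a ∈ K, G.Adj a b) (hI : 3 ≤ #I) (hK : 2 ≤ #K) :
    ∃ x y, IsBipartiteCover G.Adj K I {x} {y} := by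
  have hodd : Odd #K := by
    rw [← Nat.not_even_iff_odd]
    exact fun heven ↦ hG.not_hasBipartiteMatching_add_two hclique hcover hdisj (m := 0) heven
      (hasBipartiteMatching_two hKI hIK hK (by omega))
  have hK3 : 3 ≤ #K := by
    obtain ⟨k, hk⟩ := hodd
    omega
  exact exists_isBipartiteCover_singleton_of_not_hasBipartiteMatching hKI hIK hK3 hI
    (hG.not_hasBipartiteMatching_add_two hclique hcover hdisj (m := 1) hodd.add_one)

variable {x y z : V}

theorem IsBipartiteCover.neighborSet_eq_singleton (h : IsBipartiteCover G.Adj K I {x} {y})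
    (hzI : z ∈ I) (hzy : z ≠ y) (hzK : G.neighborSet z ⊆ K) (hz : ∃ w, G.Adj z w) :
    G.neighborSet z = {x} := by
  refine Set.Nonempty.subset_singleton_iff hz |>.1 fun w hw ↦ ?_
  simpa [hzy] using h.mem_or_mem w (hzK hw) z hzI (G.adj_symm hw)

theorem IsBipartiteCover.adj_right (h : IsBipartiteCover G.Adj K I {x} {y})
    (hKI : ∀ a ∈ K, ∃ b ∈ I, G.Adj a b) {w : V} (hw : w ∈ K) (hwx : w ≠ x) : G.Adj y w := by
  obtain ⟨b, hbI, hwb⟩ := hKI w hw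
  obtain rfl : b = y := by simpa [hwx] using h.mem_or_mem w hw b hbI hwb
  exact hwb.symm

theorem IsBipartiteCover.neighborSet_right (h : IsBipartiteCover G.Adj K I {x} {y})
    (hKI : ∀ a ∈ K, ∃ b ∈ I, G.Adj a b) (hyK : G.neighborSet y ⊆ K) :
    G.neighborSet y = (K : Set V) \ {x} ∨ G.neighborSet y = (K : Set V) := by
  have hsub : (K : Set V) \ {x} ⊆ G.neighborSet y := fun w hw ↦ h.adj_right hKI hw.1 hw.2
  by_cases hxy : G.Adj y x
  · refine .inr (hyK.antisymm fun w hw ↦ ?_)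
    obtain rfl | hwx := eq_or_ne w x
    exacts [hxy, hsub ⟨hw, hwx⟩]
  · exact .inl (Set.Subset.antisymm (Set.subset_sdiff_singleton hyK hxy) hsub)

end SplitGraph

theorem stmt_6 {V : Type*} [Fintype V] [DecidableEq V]
    (G : SimpleGraph V) [DecidableRel G.Adj]
    (hNoIso : ∀ v : V, ∃ w : V, G.Adj v w)
    (K I : Finset V)
    (hdisj : Disjoint K I) (hcover : K ∪ I = Finset.univ)
    (hclique : G.IsClique (K : Set V)) (hindep : IsIndepSet G (I : Set V))
    (hKI : ∀ k ∈ K, ∃ i ∈ I, G.Adj k i)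
    (hEq : Equimatchable G) (hI3 : 3 ≤ I.card) (hK2 : 2 ≤ K.card) :
    ∃ x ∈ K, ∃ y ∈ I,
      (∀ z ∈ I, z ≠ y → G.neighborSet z = {x}) ∧
      (G.neighborSet y = (K : Set V) \ {x} ∨ G.neighborSet y = (K : Set V)) := by
  have hI : (I : Set V) = (K : Set V)ᶜ := by
    rw [← coe_compl, (IsCompl.of_eq (disjoint_iff.1 hdisj) hcover).compl_eq]
  have hKcover : G.IsVertexCover (K : Set V) := by
    rw [← SimpleGraph.isIndepSet_compl_iff_isVertexCover, ← hI]
    exact hindep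
  have hnbr : ∀ z ∈ I, G.neighborSet z ⊆ K := fun z hz w hzw ↦
    (hKcover hzw).resolve_left (disjoint_right.1 hdisj hz)
  have hIK : ∀ i ∈ I, ∃ k ∈ K, G.Adj k i := fun i hi ↦
    (hNoIso i).imp fun k hik ↦ ⟨hnbr i hi hik, hik.symm⟩
  obtain ⟨x, y, hxy⟩ :=
    hEq.exists_isBipartiteCover_singleton hclique hKcover hdisj hKI hIK hI3 hK2
  have hyI : y ∈ I := singleton_subset_iff.1 hxy.right_subset
  exact ⟨x, singleton_subset_iff.1 hxy.left_subset, y, hyI,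
    fun z hz hzy ↦ hxy.neighborSet_eq_singleton hz hzy (hnbr z hz) (hNoIso z),
    hxy.neighborSet_right hKI (hnbr y hyI)⟩
end
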